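/- Fix natural numbers n ≥ 1, d ≥ 2 and T, and a real α ≥ 0 with (T : ℝ) ≥ 4·α·d·Real.log n. Let μ be the product probability measure on Fin n → Bool with independent coordinates each equal to true with probability 1 - 1/d, and let ν be the product over Fin T of μ. For each i : Fin n let P_i be a finite subset of Fin n with i ∉ P_i and (P_i).card ≤ d. Then ν {ω | ∃ i : Fin n, ∀ t : Fin T, ¬(ω t i = false ∧ ∀ j ∈ P_i, ω t j = true)} ≤ (n : ℝ)^(1 - α). -/

import Mathlib

/-!
In a single round the event that `P i` is included and `i` excluded has probability
`(1/d) (1 - 1/d) ^ |P i| ≥ (1/d) (1 - 1/d) ^ d ≥ 1/(4d)`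
(`interventionRound_good_ge`; the last step is `quarter_le_one_sub_inv_pow`).
By independence all `T` rounds miss it with probability at most
`(1 - 1/(4d)) ^ T ≤ exp (-T/(4d)) ≤ n ^ (-α)`, and a union bound over the `n` variables
gives `n · n ^ (-α) = n ^ (1 - α)`.
-/

open MeasureTheory ENNReal

/-- The measure on `Bool` assigning probability `1 - 1/d` to `true` and `1/d` to `false`:
the distribution of the indicator of "variable included in the random intervention set". -/
noncomputable def bernoulliInclusion (d : ℕ) : Measure Bool :=
  (1 / (d : ℝ≥0∞)) • Measure.dirac false + (1 - 1 / (d : ℝ≥0∞)) • Measure.dirac true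

/-- One round of the randomized intervention-selection algorithm: the product measure on
`Fin n → Bool` whose coordinates are independent, each equal to `true` with
probability `1 - 1/d`. -/
noncomputable def interventionRound (n d : ℕ) : Measure (Fin n → Bool) :=
  Measure.pi fun _ : Fin n => bernoulliInclusion d

/-- `T` independent rounds of the randomized intervention-selection algorithm. -/
noncomputable def interventionRounds (n d T : ℕ) : Measure (Fin T → Fin n → Bool) :=
  Measure.pi fun _ : Fin T => interventionRound n d

/-- Bernoulli's inequality with the real exponent `d/2 ≥ 1` gives `1/2 ≤ (1 - 1/d) ^ (d/2)`;
squaring yields the claim. -/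
lemma quarter_le_one_sub_inv_pow (d : ℕ) (hd : 2 ≤ d) :
    (1 / 4 : ℝ) ≤ (1 - 1 / (d : ℝ)) ^ d := by
  have hd' : (2 : ℝ) ≤ d := by exact_mod_cast hd
  have hinv : 1 / (d : ℝ) ≤ 1 := by
    rw [div_le_one (by linarith)]; linarith
  have h := one_add_mul_self_le_rpow_one_add (s := -(1 / (d : ℝ))) (by linarith)
    (p := (d : ℝ) / 2) (by linarith)
  have hhalf : 1 + (d : ℝ) / 2 * -(1 / (d : ℝ)) = 1 / 2 := by
    field_simp; norm_num
  rw [hhalf, ← sub_eq_add_neg] at h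
  have hsq : (1 - 1 / (d : ℝ)) ^ d = ((1 - 1 / (d : ℝ)) ^ ((d : ℝ) / 2)) ^ 2 := by
    rw [← Real.rpow_natCast, ← Real.rpow_natCast, ← Real.rpow_mul (by linarith)]
    congr 1
    push_cast
    ring
  rw [hsq]
  nlinarith

lemma isProbabilityMeasure_bernoulliInclusion (d : ℕ) (hd : 2 ≤ d) :
    IsProbabilityMeasure (bernoulliInclusion d) := by
  constructor
  have h : 1 / (d : ℝ≥0∞) ≤ 1 := by
    rw [one_div]
    exact ENNReal.inv_le_one.2 (by exact_mod_cast (by omega : 1 ≤ d))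
  simpa [bernoulliInclusion] using add_tsub_cancel_of_le h

lemma bernoulliInclusion_false (d : ℕ) :
    bernoulliInclusion d {false} = 1 / (d : ℝ≥0∞) := by
  simp [bernoulliInclusion]

lemma bernoulliInclusion_true (d : ℕ) :
    bernoulliInclusion d {true} = 1 - 1 / (d : ℝ≥0∞) := by
  simp [bernoulliInclusion]

lemma interventionRound_good_ge (n d : ℕ) (hd : 2 ≤ d) (i : Fin n) (P : Finset (Fin n))
    (hi : i ∉ P) (hP : P.card ≤ d) :
    ENNReal.ofReal (1 / (4 * d)) ≤
      interventionRound n d {x | x i = false ∧ ∀ j ∈ P, x j = true} := by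
  have := isProbabilityMeasure_bernoulliInclusion d hd
  have hd' : (2 : ℝ) ≤ d := by exact_mod_cast hd
  have hbox : {x : Fin n → Bool | x i = false ∧ ∀ j ∈ P, x j = true} =
      Set.pi Set.univ (fun j => if j = i then {false} else if j ∈ P then {true} else Set.univ) := by
    ext x
    simp only [Set.mem_ofPred_eq, Set.mem_pi, Set.mem_univ, true_imp_iff]
    constructor
    · rintro ⟨h1, h2⟩ j
      split_ifs with h h'
      · simpa [h] using h1
      · simpa using h2 j h'
      · trivial
    · intro h
      refine ⟨by simpa using h i, fun j hj => ?_⟩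
      have hji : j ≠ i := fun e => hi (e ▸ hj)
      simpa [hji, hj] using h j
  have hval : interventionRound n d {x | x i = false ∧ ∀ j ∈ P, x j = true} =
      1 / (d : ℝ≥0∞) * (1 - 1 / (d : ℝ≥0∞)) ^ P.card := by
    rw [hbox, interventionRound, Measure.pi_pi]
    calc _ = ∏ j : Fin n, ((if j = i then 1 / (d : ℝ≥0∞) else 1) *
          (if j ∈ P then 1 - 1 / (d : ℝ≥0∞) else 1)) := by
          refine Finset.prod_congr rfl fun j _ => ?_
          by_cases hji : j = i
          · subst hji
            simp only [if_true, if_neg hi, bernoulliInclusion_false, mul_one]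
          · by_cases hj : j ∈ P
            · simp only [if_neg hji, if_pos hj, bernoulliInclusion_true, one_mul]
            · simp only [if_neg hji, if_neg hj, measure_univ, one_mul]
      _ = _ := by
          rw [Finset.prod_mul_distrib, Finset.prod_ite_eq', Finset.prod_ite_mem]
          simp
  have hq : 1 / (d : ℝ≥0∞) = ENNReal.ofReal (1 / d) := by
    rw [ENNReal.ofReal_div_of_pos (by linarith)]
    simp
  have hle1 : 1 / (d : ℝ) ≤ 1 := by
    rw [div_le_one (by linarith)]; linarith
  have hp : 1 - 1 / (d : ℝ≥0∞) = ENNReal.ofReal (1 - 1 / d) := by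
    rw [hq, ENNReal.ofReal_sub _ (by positivity), ENNReal.ofReal_one]
  rw [hval, hp, hq, ← ENNReal.ofReal_pow (by linarith), ← ENNReal.ofReal_mul (by positivity)]
  apply ENNReal.ofReal_le_ofReal
  have h1 := quarter_le_one_sub_inv_pow d hd
  have h2 : (1 - 1 / (d : ℝ)) ^ d ≤ (1 - 1 / (d : ℝ)) ^ P.card :=
    pow_le_pow_of_le_one (by linarith) (by linarith [show 0 ≤ 1 / (d : ℝ) by positivity]) hP
  calc 1 / (4 * (d : ℝ)) = 1 / d * (1 / 4) := by ring
    _ ≤ _ := by gcongr; linarith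

/-- For a fixed variable, all `T` rounds fail with probability at most `n ^ (-α)`. -/
lemma interventionRounds_fail_le (n d T : ℕ) (hn : 1 ≤ n) (hd : 2 ≤ d)
    (α : ℝ) (hT : (T : ℝ) ≥ 4 * α * (d : ℝ) * Real.log n)
    (i : Fin n) (P : Finset (Fin n)) (hi : i ∉ P) (hP : P.card ≤ d) :
    interventionRounds n d T {ω | ∀ t : Fin T, ¬(ω t i = false ∧ ∀ j ∈ P, ω t j = true)} ≤
      ENNReal.ofReal ((n : ℝ) ^ (-α)) := by
  have := isProbabilityMeasure_bernoulliInclusion d hd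
  have : IsProbabilityMeasure (interventionRound n d) := by
    unfold interventionRound; infer_instance
  have hd' : (2 : ℝ) ≤ d := by exact_mod_cast hd
  have hn' : (0 : ℝ) < n := by exact_mod_cast hn
  have hbox : {ω : Fin T → Fin n → Bool |
      ∀ t : Fin T, ¬(ω t i = false ∧ ∀ j ∈ P, ω t j = true)} =
      Set.pi Set.univ (fun _ => {x | x i = false ∧ ∀ j ∈ P, x j = true}ᶜ) := by
    ext ω
    simp only [Set.mem_ofPred_eq, Set.mem_pi, Set.mem_univ, true_imp_iff, Set.mem_compl_iff]
  have hle1 : 1 / (4 * (d : ℝ)) ≤ 1 := by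
    rw [div_le_one (by linarith)]; linarith
  have hround : interventionRound n d {x | x i = false ∧ ∀ j ∈ P, x j = true}ᶜ ≤
      ENNReal.ofReal (1 - 1 / (4 * d)) := by
    rw [prob_compl_eq_one_sub (Set.toFinite _).measurableSet,
      ENNReal.ofReal_sub _ (by positivity), ENNReal.ofReal_one]
    exact tsub_le_tsub_left (interventionRound_good_ge n d hd i P hi hP) _
  rw [hbox, interventionRounds, Measure.pi_pi, Finset.prod_const, Finset.card_univ,
    Fintype.card_fin]
  refine (pow_le_pow_left' hround T).trans ?_
  rw [← ENNReal.ofReal_pow (by linarith)]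
  apply ENNReal.ofReal_le_ofReal
  calc (1 - 1 / (4 * (d : ℝ))) ^ T ≤ (Real.exp (-(1 / (4 * (d : ℝ))))) ^ T :=
        pow_le_pow_left₀ (by linarith) (Real.one_sub_le_exp_neg _) T
    _ = Real.exp (-(T / (4 * d))) := by
        rw [← Real.exp_nat_mul]; congr 1; ring
    _ ≤ Real.exp (Real.log n * -α) := by
        apply Real.exp_le_exp.2
        have : α * Real.log n ≤ T / (4 * d) := by
          rw [le_div_iff₀ (by linarith)]; linarith
        linarith
    _ = (n : ℝ) ^ (-α) := (Real.rpow_def_of_pos hn' _).symm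

/-- For `n ≥ 1`, `d ≥ 2`, `α ≥ 0` and `(T : ℝ) ≥ 4·α·d·log n`: given for
every treatment variable `i : Fin n` its parent set `P i` with `i ∉ P i` and `(P i).card ≤ d`,
the probability that for some `i` no round of the `T` independent rounds produces an
intervention set containing `P i` and excluding `i` is at most `(n : ℝ) ^ (1 - α)`
(real power). -/
theorem interventionRounds_union_bound_parents (n d T : ℕ) (hn : 1 ≤ n) (hd : 2 ≤ d)
    (α : ℝ) (hα : 0 ≤ α) (hT : (T : ℝ) ≥ 4 * α * (d : ℝ) * Real.log n)
    (P : Fin n → Finset (Fin n))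
    (hiP : ∀ i : Fin n, i ∉ P i) (hPcard : ∀ i : Fin n, (P i).card ≤ d) :
    interventionRounds n d T
        {ω | ∃ i : Fin n, ∀ t : Fin T, ¬(ω t i = false ∧ ∀ j ∈ P i, ω t j = true)} ≤
      ENNReal.ofReal ((n : ℝ) ^ ((1 : ℝ) - α)) := by
  have hn' : (0 : ℝ) < n := by exact_mod_cast hn
  rw [Set.ofPred_exists]
  refine (measure_iUnion_fintype_le _ _).trans ?_
  refine (Finset.sum_le_sum fun i _ =>
    interventionRounds_fail_le n d T hn hd α hT i (P i) (hiP i) (hPcard i)).trans ?_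
  rw [Finset.sum_const, Finset.card_univ, Fintype.card_fin, nsmul_eq_mul,
    ← ENNReal.ofReal_natCast, ← ENNReal.ofReal_mul hn'.le, sub_eq_add_neg,
    Real.rpow_add hn', Real.rpow_one]
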